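/- Existence of an optimal deterministic stationary policy: let S and A be nonempty finite types, P : A → Matrix S S ℝ with each P a row-stochastic, R : S → ℝ, and γ ∈ ℝ with 0 ≤ γ < 1. Then there exists a deterministic policy π : S → A such that for every deterministic policy π' : S → A and every s ∈ S, V^π(s) ≥ V^{π'}(s), where V^σ = (I − γ·P^σ)⁻¹ *ᵥ R and P^σ(s,j) = (P (σ s))(s,j) for any deterministic policy σ. -/

import Mathlib

open Matrix BigOperators

/-- A matrix is row-stochastic if all entries are nonnegative and every row sums to 1. -/
def RowStochastic {S : Type*} [Fintype S] (P : Matrix S S ℝ) : Prop :=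
  (∀ i j, 0 ≤ P i j) ∧ (∀ i, ∑ j, P i j = 1)

/-- The transition matrix `P^π` of a deterministic policy `π`:
`P^π(s, j) = (P (π s))(s, j)`. -/
def polMat {S A : Type*} (P : A → Matrix S S ℝ) (π : S → A) : Matrix S S ℝ :=
  Matrix.of fun s j => P (π s) s j

/-- The value vector `V^π = (I - γ • P^π)⁻¹ *ᵥ R` of a deterministic policy `π`. -/
noncomputable def polVal {S A : Type*} [Fintype S] [DecidableEq S]
    (P : A → Matrix S S ℝ) (γ : ℝ) (R : S → ℝ) (π : S → A) : S → ℝ :=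
  (1 - γ • polMat P π)⁻¹ *ᵥ R

/-- Maximum principle. -/
lemma aux_max {S : Type*} [Fintype S] (M : Matrix S S ℝ) (hM : RowStochastic M)
    (γ : ℝ) (hγ0 : 0 ≤ γ) (hγ1 : γ < 1) (x : S → ℝ)
    (hx : ∀ s, x s ≤ γ * ∑ j, M s j * x j) : ∀ s, x s ≤ 0 := by
  intro s
  have : Nonempty S := ⟨s⟩
  obtain ⟨m, hm⟩ := Finite.exists_max x
  refine (hm s).trans ?_
  have h1 : ∑ j, M m j * x j ≤ x m := by
    calc ∑ j, M m j * x j ≤ ∑ j, M m j * x m :=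
          Finset.sum_le_sum fun j _ => mul_le_mul_of_nonneg_left (hm j) (hM.1 m j)
      _ = x m := by rw [← Finset.sum_mul, hM.2 m, one_mul]
  have h2 := mul_le_mul_of_nonneg_left h1 hγ0
  have h3 := hx m
  by_contra! h
  nlinarith

lemma aux_polMat {S A : Type*} [Fintype S] (P : A → Matrix S S ℝ)
    (hP : ∀ a, RowStochastic (P a)) (π : S → A) : RowStochastic (polMat P π) :=
  ⟨fun i j => (hP (π i)).1 i j, fun i => (hP (π i)).2 i⟩

lemma aux_bellman {S A : Type*} [Fintype S] [DecidableEq S] (P : A → Matrix S S ℝ)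
    (hP : ∀ a, RowStochastic (P a)) (R : S → ℝ) (γ : ℝ) (hγ0 : 0 ≤ γ) (hγ1 : γ < 1)
    (π : S → A) (s : S) :
    polVal P γ R π s = R s + γ * ∑ j, P (π s) s j * polVal P γ R π j := by
  have key : ∀ (v : S → ℝ) (s : S), ((1 - γ • polMat P π) *ᵥ v) s
      = v s - γ * ∑ j, P (π s) s j * v j := by
    intro v s
    rw [Matrix.sub_mulVec, Matrix.one_mulVec, Matrix.smul_mulVec]
    simp [Matrix.mulVec, dotProduct, polMat]
  have hu : IsUnit (1 - γ • polMat P π) := by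
    rw [← Matrix.mulVec_injective_iff_isUnit]
    intro v w hvw
    have h : ∀ s, v s - w s = γ * ∑ j, P (π s) s j * (v j - w j) := by
      intro s
      have := congrFun hvw s
      simp only [key] at this
      simp only [mul_sub, Finset.sum_sub_distrib]
      linarith
    have h1 := aux_max _ (aux_polMat P hP π) γ hγ0 hγ1 (fun s => v s - w s) (fun s => (h s).le)
    have h2 := aux_max _ (aux_polMat P hP π) γ hγ0 hγ1 (fun s => w s - v s) (fun s => by
      have := h s
      simp only [polMat, Matrix.of_apply, mul_sub, Finset.sum_sub_distrib] at this ⊢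
      linarith)
    funext s
    have := h1 s
    have := h2 s
    linarith
  have h : (1 - γ • polMat P π) *ᵥ polVal P γ R π = R := by
    rw [polVal, Matrix.mulVec_mulVec, Matrix.mul_nonsing_inv _
      ((Matrix.isUnit_iff_isUnit_det _).1 hu), Matrix.one_mulVec]
  have := congrFun h s
  rw [key] at this
  linarith

/-- Existence of an optimal deterministic stationary policy. -/
theorem exists_optimal_deterministic_policy {S A : Type*} [Fintype S] [DecidableEq S]
    [Nonempty S] [Fintype A] [Nonempty A] (P : A → Matrix S S ℝ)
    (hP : ∀ a, RowStochastic (P a)) (R : S → ℝ) (γ : ℝ) (hγ0 : 0 ≤ γ) (hγ1 : γ < 1) :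
    ∃ π : S → A, ∀ π' : S → A, ∀ s : S, polVal P γ R π' s ≤ polVal P γ R π s := by
  obtain ⟨π, hπ⟩ := Finite.exists_max (fun π : S → A => ∑ s, polVal P γ R π s)
  have B := aux_bellman P hP R γ hγ0 hγ1
  have hg : ∀ s, ∃ a, ∀ b, ∑ j, P b s j * polVal P γ R π j ≤ ∑ j, P a s j * polVal P γ R π j :=
    fun s => Finite.exists_max (fun a => ∑ j, P a s j * polVal P γ R π j)
  choose g hg using hg
  have hle : ∀ s, polVal P γ R π s ≤ polVal P γ R g s := by
    intro s
    have := aux_max _ (aux_polMat P hP g) γ hγ0 hγ1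
      (fun s => polVal P γ R π s - polVal P γ R g s) (fun s => by
        have h1 := B π s
        have h2 := B g s
        have h3 := mul_le_mul_of_nonneg_left (hg s (π s)) hγ0
        simp only [polMat, Matrix.of_apply, mul_sub, Finset.sum_sub_distrib]
        linarith) s
    linarith
  have heq : ∀ s, polVal P γ R π s = polVal P γ R g s := by
    have := (Finset.sum_eq_sum_iff_of_le (fun s (_ : s ∈ Finset.univ) => hle s)).1
      (le_antisymm (Finset.sum_le_sum fun s _ => hle s) (hπ g))
    exact fun s => this s (Finset.mem_univ s)
  refine ⟨π, fun σ s => ?_⟩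
  have := aux_max _ (aux_polMat P hP σ) γ hγ0 hγ1
    (fun s => polVal P γ R σ s - polVal P γ R π s) (fun s => by
      have h1 := B σ s
      have h2 := B g s
      simp only [← heq] at h2
      have h3 := mul_le_mul_of_nonneg_left (hg s (σ s)) hγ0
      simp only [polMat, Matrix.of_apply, mul_sub, Finset.sum_sub_distrib]
      linarith) s
  linarith
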